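/- Let A_h be a symmetric positive-definite operator on a finite-dimensional inner product space V_h, S_h a symmetric positive-definite smoother with ρ(A_h)^{-1}(v,v) ≲ (S_h v, v) ≲ ρ(A_h)^{-1}(v,v), B₀ a symmetric positive-definite coarse solver on V₀ with (A₀w,w) ≲ (B₀A₀w, A₀w) ≲ (A₀w,w), and Π: V₀ → V_h with ‖Πw‖_{A_h} ≲ ‖w‖_{A₀}. Suppose there exists a linear operator P: V_h → V₀ with ‖Pv‖_{A₀} ≲ ‖v‖_{A_h} and ‖v − ΠPv‖² ≲ ρ(A_h)^{-1}‖v‖²_{A_h}. Then the preconditioner B_h = S_h + Π B₀ Πᵀ satisfies κ(B_h A_h) ≲ 1, i.e., the condition number of B_h A_h is bounded by a constant independent of the mesh size. -/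

import Mathlib

open scoped RealInnerProductSpace

/-!
With `a = ⟪A v, v⟫` and `w` a solution of `A₀ w = Πᵀ A v`, the definition of `B` gives
`⟪A (B (A v)), v⟫ = ⟪S (A v), A v⟫ + ⟪B₀ (A₀ w), A₀ w⟫`, so it suffices to compare `a` with
`ρ⁻¹ ‖A v‖² + ⟪A₀ w, w⟫`. By duality, `A ≤ ρ` and the energy stability of `Π` bound both summands
by multiples of `a`. Conversely `a = ⟪A v, v - Π P v⟫ + ⟪A₀ w, P v⟫`, and Cauchy–Schwarz in `V`
and in the `A₀`-energy, together with the bounds on `v - Π P v` and `P v`, bounds `a` by a multiple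
of the sum.
-/

theorem le_of_sq_le_mul_self {R : Type*} [Semiring R] [LinearOrder R] [IsStrictOrderedRing R]
    {a b : R} (hb : 0 ≤ b) (h : a ^ 2 ≤ b * a) : a ≤ b := by
  by_contra! hlt
  have ha : 0 < a := hb.trans_lt hlt
  exact hlt.not_ge (le_of_mul_le_mul_right (by rwa [← sq]) ha)

theorem add_sq_le_add_mul_add {R : Type*} [CommSemiring R] [LinearOrder R] [IsStrictOrderedRing R]
    [ExistsAddOfLE R] {p q α β s t : R} (hα : 0 ≤ α) (hβ : 0 ≤ β) (hs : 0 ≤ s) (ht : 0 ≤ t)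
    (hp : p ^ 2 ≤ α * s) (hq : q ^ 2 ≤ β * t) :
    (p + q) ^ 2 ≤ (α + β) * (s + t) := by
  simpa only [Fin.sum_univ_two] using!
    Finset.univ.sum_sq_le_sum_mul_sum_of_sq_le_mul (r := ![p, q]) (f := ![α, β]) (g := ![s, t])
      (by simp [Fin.forall_fin_two, hα, hβ]) (by simp [Fin.forall_fin_two, hs, ht])
      (by simp [Fin.forall_fin_two, hp, hq])

section PositiveOperator

variable {V : Type*} [NormedAddCommGroup V] [InnerProductSpace ℝ V] {A : V →ₗ[ℝ] V}

theorem isPositive_of_inner_pos (hA : A.IsSymmetric) (hpos : ∀ v, v ≠ 0 → 0 < ⟪A v, v⟫) :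
    A.IsPositive :=
  A.isPositive_iff.mpr ⟨hA, fun v ↦ by
    obtain rfl | hv := eq_or_ne v 0
    · simp
    · exact (hpos v hv).le⟩

theorem inner_apply_sq_le (hA : A.IsPositive) (u v : V) :
    ⟪A u, v⟫ ^ 2 ≤ ⟪A u, u⟫ * ⟪A v, v⟫ :=
  LinearMap.BilinForm.apply_sq_le_of_symm (innerₗ V ∘ₗ A) hA.inner_nonneg_left
    ⟨fun x y ↦ (hA.isSymmetric x y).trans (real_inner_comm _ _)⟩ u v

theorem inner_apply_le_mul_inner_apply_self (hA : A.IsPositive) {c : ℝ} (hc : 0 ≤ c) {u v : V}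
    (hu : ⟪A u, u⟫ ≤ c * ⟪A v, u⟫) : ⟪A v, u⟫ ≤ c * ⟪A v, v⟫ := by
  have hv : 0 ≤ ⟪A v, v⟫ := hA.inner_nonneg_left v
  refine le_of_sq_le_mul_self (by positivity) ?_
  calc ⟪A v, u⟫ ^ 2 ≤ ⟪A v, v⟫ * ⟪A u, u⟫ := inner_apply_sq_le hA v u
    _ ≤ ⟪A v, v⟫ * (c * ⟪A v, u⟫) := by gcongr
    _ = c * ⟪A v, v⟫ * ⟪A v, u⟫ := by ring

theorem norm_apply_sq_le_mul_inner (hA : A.IsPositive) {ρ : ℝ} (hρ : 0 ≤ ρ)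
    (hAρ : ∀ v, ⟪A v, v⟫ ≤ ρ * ‖v‖ ^ 2) (v : V) : ‖A v‖ ^ 2 ≤ ρ * ⟪A v, v⟫ := by
  rw [← real_inner_self_eq_norm_sq]
  refine inner_apply_le_mul_inner_apply_self hA hρ ?_
  rw [real_inner_self_eq_norm_sq]
  exact hAρ (A v)

end PositiveOperator

section AuxiliarySpace

variable {V W : Type*} [NormedAddCommGroup V] [InnerProductSpace ℝ V]
  [NormedAddCommGroup W] [InnerProductSpace ℝ W]
  {A : V →ₗ[ℝ] V} {A₀ : W →ₗ[ℝ] W} {Pi : W →ₗ[ℝ] V} {PiT : V →ₗ[ℝ] W}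

/-- The auxiliary space preconditioner `S + Π B₀ Πᵀ` with smoother `S` and coarse solver `B₀`.
The transpose `PiT` of `Pi` is an argument of its own, so that `V` need not be complete. -/
def auxiliarySpacePreconditioner (S : V →ₗ[ℝ] V) (B₀ : W →ₗ[ℝ] W) (Pi : W →ₗ[ℝ] V)
    (PiT : V →ₗ[ℝ] W) : V →ₗ[ℝ] V :=
  S + Pi ∘ₗ B₀ ∘ₗ PiT

theorem inner_auxiliarySpacePreconditioner (hA : A.IsSymmetric)
    (hPiT : ∀ w v, ⟪Pi w, v⟫ = ⟪w, PiT v⟫) (S : V →ₗ[ℝ] V) (B₀ : W →ₗ[ℝ] W) (v : V) :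
    ⟪A (auxiliarySpacePreconditioner S B₀ Pi PiT (A v)), v⟫ =
      ⟪S (A v), A v⟫ + ⟪B₀ (PiT (A v)), PiT (A v)⟫ := by
  rw [hA, auxiliarySpacePreconditioner, LinearMap.add_apply, inner_add_left, LinearMap.comp_apply,
    LinearMap.comp_apply, hPiT]

theorem exists_apply_eq_transpose_apply [FiniteDimensional ℝ W] (hA : A.IsPositive)
    (hA₀ : A₀.IsSymmetric) (hPiT : ∀ w v, ⟪Pi w, v⟫ = ⟪w, PiT v⟫) {c : ℝ}
    (hPi : ∀ w, ⟪A (Pi w), Pi w⟫ ≤ c * ⟪A₀ w, w⟫) (v : V) : ∃ w, A₀ w = PiT (A v) := by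
  suffices PiT (A v) ∈ A₀.kerᗮ by
    rwa [LinearMap.orthogonal_ker, hA₀.adjoint_eq] at this
  intro z (hz : A₀ z = 0)
  have henergy : ⟪A (Pi z), Pi z⟫ ≤ 0 := by simpa only [hz, inner_zero_left, mul_zero] using hPi z
  have hsq : ⟪A (Pi z), v⟫ ^ 2 ≤ 0 :=
    (inner_apply_sq_le hA _ _).trans
      (mul_nonpos_of_nonpos_of_nonneg henergy (hA.inner_nonneg_left v))
  rw [← hPiT, ← hA.isSymmetric]
  exact pow_eq_zero_iff two_ne_zero |>.mp (hsq.antisymm (sq_nonneg _))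

theorem inner_apply_self_le_of_apply_eq_transpose (hA : A.IsPositive)
    (hPiT : ∀ w v, ⟪Pi w, v⟫ = ⟪w, PiT v⟫) {c : ℝ} (hc : 0 ≤ c) {v : V} {w : W}
    (hPi : ⟪A (Pi w), Pi w⟫ ≤ c * ⟪A₀ w, w⟫) (hw : A₀ w = PiT (A v)) :
    ⟪A₀ w, w⟫ ≤ c * ⟪A v, v⟫ := by
  have hdual : ⟪A₀ w, w⟫ = ⟪A v, Pi w⟫ := by
    rw [hw, real_inner_comm, ← hPiT, real_inner_comm]
  rw [hdual] at hPi ⊢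
  exact inner_apply_le_mul_inner_apply_self hA hc hPi

/-- The lower bound of the fictitious space lemma, for the decomposition `v = (v - Π z) + Π z`. -/
theorem inner_apply_self_le_of_stable_decomposition (hA : A.IsPositive) (hA₀ : A₀.IsPositive)
    (hPiT : ∀ w v, ⟪Pi w, v⟫ = ⟪w, PiT v⟫) {v : V} {w z : W} (hw : A₀ w = PiT (A v))
    {ε c σ τ s t : ℝ} (hε : 0 ≤ ε) (hc : 0 ≤ c) (hσ : 0 < σ) (hτ : 0 < τ)
    (hfine : ‖v - Pi z‖ ^ 2 ≤ ε * ⟪A v, v⟫) (hcoarse : ⟪A₀ z, z⟫ ≤ c * ⟪A v, v⟫)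
    (hs : σ * ‖A v‖ ^ 2 ≤ s) (ht : τ * ⟪A₀ w, w⟫ ≤ t) :
    ⟪A v, v⟫ ≤ (ε / σ + c / τ) * (s + t) := by
  have ha : 0 ≤ ⟪A v, v⟫ := hA.inner_nonneg_left v
  have hw₀ : 0 ≤ ⟪A₀ w, w⟫ := hA₀.inner_nonneg_left w
  have hs₀ : 0 ≤ s := le_trans (by positivity) hs
  have ht₀ : 0 ≤ t := le_trans (by positivity) ht
  have hsplit : ⟪A v, v⟫ = ⟪A v, v - Pi z⟫ + ⟪A₀ w, z⟫ := by
    rw [hw, real_inner_comm z, ← hPiT, real_inner_comm (A v) (Pi z), inner_sub_right,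
      sub_add_cancel]
  have hp : ⟪A v, v - Pi z⟫ ^ 2 ≤ ε / σ * (s * ⟪A v, v⟫) := calc
    ⟪A v, v - Pi z⟫ ^ 2 ≤ ‖A v‖ ^ 2 * ‖v - Pi z‖ ^ 2 := by
      rw [← mul_pow]
      exact sq_le_sq.mpr ((abs_real_inner_le_norm _ _).trans (le_abs_self _))
    _ ≤ s / σ * (ε * ⟪A v, v⟫) := by
      have hvs : ‖A v‖ ^ 2 ≤ s / σ := (le_div_iff₀' hσ).mpr hs
      exact mul_le_mul hvs hfine (sq_nonneg _) ((sq_nonneg _).trans hvs)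
    _ = ε / σ * (s * ⟪A v, v⟫) := by ring
  have hq : ⟪A₀ w, z⟫ ^ 2 ≤ c / τ * (t * ⟪A v, v⟫) := calc
    ⟪A₀ w, z⟫ ^ 2 ≤ ⟪A₀ w, w⟫ * ⟪A₀ z, z⟫ := inner_apply_sq_le hA₀ w z
    _ ≤ t / τ * (c * ⟪A v, v⟫) := by
      have hwt : ⟪A₀ w, w⟫ ≤ t / τ := (le_div_iff₀' hτ).mpr ht
      exact mul_le_mul hwt hcoarse (hA₀.inner_nonneg_left z) (hw₀.trans hwt)
    _ = c / τ * (t * ⟪A v, v⟫) := by ring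
  refine le_of_sq_le_mul_self (by positivity) ?_
  calc ⟪A v, v⟫ ^ 2 = (⟪A v, v - Pi z⟫ + ⟪A₀ w, z⟫) ^ 2 := by rw [← hsplit]
    _ ≤ (ε / σ + c / τ) * (s * ⟪A v, v⟫ + t * ⟪A v, v⟫) :=
      add_sq_le_add_mul_add (by positivity) (by positivity) (by positivity) (by positivity) hp hq
    _ = (ε / σ + c / τ) * (s + t) * ⟪A v, v⟫ := by ring

theorem auxiliary_space_preconditioner_condition_number_general [FiniteDimensional ℝ W]
    {cS1 cS2 cB1 cB2 cPi cP cE ρ : ℝ} (hcS1 : 0 < cS1) (hcS2 : 0 ≤ cS2) (hcB1 : 0 < cB1)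
    (hcB2 : 0 ≤ cB2) (hcE : 0 ≤ cE) (hρ : 0 < ρ)
    {S : V →ₗ[ℝ] V} {B₀ : W →ₗ[ℝ] W} {P : V → W}
    (hA : A.IsPositive) (hA₀ : A₀.IsPositive) (hPiT : ∀ w v, ⟪Pi w, v⟫ = ⟪w, PiT v⟫)
    (hAρ : ∀ v, ⟪A v, v⟫ ≤ ρ * ‖v‖ ^ 2)
    (hS : ∀ v, cS1 * ρ⁻¹ * ‖v‖ ^ 2 ≤ ⟪S v, v⟫ ∧ ⟪S v, v⟫ ≤ cS2 * ρ⁻¹ * ‖v‖ ^ 2)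
    (hB₀ : ∀ w, cB1 * ⟪A₀ w, w⟫ ≤ ⟪B₀ (A₀ w), A₀ w⟫ ∧
      ⟪B₀ (A₀ w), A₀ w⟫ ≤ cB2 * ⟪A₀ w, w⟫)
    (hPi : ∀ w, ⟪A (Pi w), Pi w⟫ ≤ cPi ^ 2 * ⟪A₀ w, w⟫)
    (hP : ∀ v, ⟪A₀ (P v), P v⟫ ≤ cP ^ 2 * ⟪A v, v⟫)
    (hE : ∀ v, ‖v - Pi (P v)‖ ^ 2 ≤ cE * ρ⁻¹ * ⟪A v, v⟫) (v : V) :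
    ⟪A v, v⟫ ≤ (cE / cS1 + cP ^ 2 / cB1) *
        ⟪A (auxiliarySpacePreconditioner S B₀ Pi PiT (A v)), v⟫ ∧
      ⟪A (auxiliarySpacePreconditioner S B₀ Pi PiT (A v)), v⟫ ≤
        (cS2 + cB2 * cPi ^ 2) * ⟪A v, v⟫ := by
  obtain ⟨w, hw⟩ := exists_apply_eq_transpose_apply hA hA₀.isSymmetric hPiT hPi v
  rw [inner_auxiliarySpacePreconditioner hA.isSymmetric hPiT, ← hw]
  constructor
  · rw [← mul_div_mul_right cE cS1 (inv_ne_zero hρ.ne')]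
    exact inner_apply_self_le_of_stable_decomposition hA hA₀ hPiT hw (by positivity)
      (by positivity) (by positivity) hcB1 (hE v) (hP v) (hS (A v)).1 (hB₀ w).1
  · have hfine : ρ⁻¹ * ‖A v‖ ^ 2 ≤ ⟪A v, v⟫ :=
      (inv_mul_le_iff₀ hρ).mpr (norm_apply_sq_le_mul_inner hA hρ.le hAρ v)
    have hcoarse : ⟪A₀ w, w⟫ ≤ cPi ^ 2 * ⟪A v, v⟫ :=
      inner_apply_self_le_of_apply_eq_transpose hA hPiT (sq_nonneg cPi) (hPi w) hw
    calc ⟪S (A v), A v⟫ + ⟪B₀ (A₀ w), A₀ w⟫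
        ≤ cS2 * ρ⁻¹ * ‖A v‖ ^ 2 + cB2 * ⟪A₀ w, w⟫ := add_le_add (hS (A v)).2 (hB₀ w).2
      _ = cS2 * (ρ⁻¹ * ‖A v‖ ^ 2) + cB2 * ⟪A₀ w, w⟫ := by ring
      _ ≤ cS2 * ⟪A v, v⟫ + cB2 * (cPi ^ 2 * ⟪A v, v⟫) := by gcongr
      _ = (cS2 + cB2 * cPi ^ 2) * ⟪A v, v⟫ := by ring

end AuxiliarySpace

/-- Auxiliary space preconditioning theorem: for any fixed constants in the
hypotheses (smoother equivalence, coarse solver equivalence, energy stability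
of the prolongation `Π`, stability and approximation of the auxiliary operator
`P`), there is a constant `C` such that for every instance of the setting
(in particular independent of the mesh size / dimension of the spaces), the
preconditioned operator `B_h A_h` with `B_h = S_h + Π B₀ Πᵀ` has all its
generalized Rayleigh quotients between `λ₀` and `λ₁ ≤ C λ₀`, i.e.
`κ(B_h A_h) ≤ C`. -/
theorem auxiliary_space_preconditioner_condition_number
    (cS1 cS2 cB1 cB2 cPi cP cE : ℝ)
    (hcS1 : 0 < cS1) (hcS2 : 0 < cS2) (hcB1 : 0 < cB1) (hcB2 : 0 < cB2)
    (hcPi : 0 < cPi) (hcP : 0 < cP) (hcE : 0 < cE) :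
    ∃ C : ℝ, 0 < C ∧
      ∀ (Vh V0 : Type)
        [NormedAddCommGroup Vh] [InnerProductSpace ℝ Vh] [FiniteDimensional ℝ Vh]
        [NormedAddCommGroup V0] [InnerProductSpace ℝ V0] [FiniteDimensional ℝ V0]
        (Ah Sh : Vh →ₗ[ℝ] Vh) (A0 B0 : V0 →ₗ[ℝ] V0)
        (Pi : V0 →ₗ[ℝ] Vh) (P : Vh →ₗ[ℝ] V0) (ρ : ℝ),
        (∀ u v : Vh, ⟪Ah u, v⟫ = ⟪u, Ah v⟫) →
        (∀ v : Vh, v ≠ 0 → 0 < ⟪Ah v, v⟫) →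
        (∀ u v : Vh, ⟪Sh u, v⟫ = ⟪u, Sh v⟫) →
        (∀ u v : V0, ⟪A0 u, v⟫ = ⟪u, A0 v⟫) →
        (∀ w : V0, w ≠ 0 → 0 < ⟪A0 w, w⟫) →
        (∀ u v : V0, ⟪B0 u, v⟫ = ⟪u, B0 v⟫) →
        0 < ρ →
        -- ρ is (an upper bound for) the spectral radius of A_h
        (∀ v : Vh, ⟪Ah v, v⟫ ≤ ρ * ‖v‖ ^ 2) →
        -- smoother spectral equivalence: ρ(A_h)⁻¹ (v,v) ≲ (S_h v, v) ≲ ρ(A_h)⁻¹ (v,v)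
        (∀ v : Vh, cS1 * ρ⁻¹ * ‖v‖ ^ 2 ≤ ⟪Sh v, v⟫ ∧ ⟪Sh v, v⟫ ≤ cS2 * ρ⁻¹ * ‖v‖ ^ 2) →
        -- coarse solver equivalence: (A₀w,w) ≲ (B₀A₀w, A₀w) ≲ (A₀w,w)
        (∀ w : V0, cB1 * ⟪A0 w, w⟫ ≤ ⟪B0 (A0 w), A0 w⟫ ∧
          ⟪B0 (A0 w), A0 w⟫ ≤ cB2 * ⟪A0 w, w⟫) →
        -- energy stability of Π: ‖Πw‖_{A_h} ≲ ‖w‖_{A₀}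
        (∀ w : V0, ⟪Ah (Pi w), Pi w⟫ ≤ cPi ^ 2 * ⟪A0 w, w⟫) →
        -- stability of P: ‖Pv‖_{A₀} ≲ ‖v‖_{A_h}
        (∀ v : Vh, ⟪A0 (P v), P v⟫ ≤ cP ^ 2 * ⟪Ah v, v⟫) →
        -- approximation: ‖v − ΠPv‖² ≲ ρ(A_h)⁻¹ ‖v‖²_{A_h}
        (∀ v : Vh, ‖v - Pi (P v)‖ ^ 2 ≤ cE * ρ⁻¹ * ⟪Ah v, v⟫) →
        ∃ lam0 lam1 : ℝ, 0 < lam0 ∧ lam1 ≤ C * lam0 ∧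
          ∀ v : Vh,
            lam0 * ⟪Ah v, v⟫ ≤
              ⟪Ah ((Sh + Pi ∘ₗ B0 ∘ₗ LinearMap.adjoint Pi) (Ah v)), v⟫ ∧
            ⟪Ah ((Sh + Pi ∘ₗ B0 ∘ₗ LinearMap.adjoint Pi) (Ah v)), v⟫ ≤
              lam1 * ⟪Ah v, v⟫ := by
  have hK : 0 < cE / cS1 + cP ^ 2 / cB1 := by positivity
  refine ⟨(cS2 + cB2 * cPi ^ 2) * (cE / cS1 + cP ^ 2 / cB1), by positivity, ?_⟩
  intro Vh V0 _ _ _ _ _ _ Ah Sh A0 B0 Pi P ρ hAs hAp _ hA0s hA0p _ hρ hAρ hS hB hPi hP hE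
  have hA : Ah.IsPositive := isPositive_of_inner_pos hAs hAp
  have hA0 : A0.IsPositive := isPositive_of_inner_pos hA0s hA0p
  refine ⟨(cE / cS1 + cP ^ 2 / cB1)⁻¹, cS2 + cB2 * cPi ^ 2, inv_pos.mpr hK,
    (mul_inv_cancel_right₀ hK.ne' _).ge, fun v ↦ ?_⟩
  rw [inv_mul_le_iff₀ hK]
  exact auxiliary_space_preconditioner_condition_number_general hcS1 hcS2.le hcB1 hcB2.le hcE.le
    hρ hA hA0 (fun w v ↦ (LinearMap.adjoint_inner_right Pi w v).symm) hAρ hS hB hPi hP hE v
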